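/- Fix a semi-infinite initial burger stack S₀ containing infinitely many c's and infinitely many h's, and fix N > 0. If two sequences x = (x(1),…,x(N)) and x' = (x'(1),…,x'(N)) in Θ^N agree in all coordinates except exactly one, then the resulting discrepancy values satisfy |𝒟_N(x) − 𝒟_N(x')| ≤ 2. -/

import Mathlib

open MeasureTheory ProbabilityTheory Filter Topology
open scoped ENNReal NNReal

/-- The five-symbol alphabet Θ: cheeseburger, hamburger, cheeseburger order,
hamburger order, flexible order. -/
inductive Burger where
  | c | h | C | H | F
deriving DecidableEq

instance : MeasurableSpace Burger := ⊤

namespace Burger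

/-- `true` iff the symbol is a burger (`c` or `h`). -/
def isBurgerSym : Burger → Bool
  | c => true
  | h => true
  | _ => false

/-- `true` iff the symbol is an order (`C`, `H` or `F`). -/
def isOrderSym (s : Burger) : Bool := !s.isBurgerSym

/-- One reduction step acting on a state `(O, B)` where `O` is the list of unfulfilled
orders (most recent first) and `B` is the burger stack (top first). -/
def stepRev (s : List Burger × List Burger) (x : Burger) : List Burger × List Burger :=
  match x with
  | .c => (s.1, .c :: s.2)
  | .h => (s.1, .h :: s.2)
  | .C => if Burger.c ∈ s.2 then (s.1, s.2.erase .c) else (.C :: s.1, s.2)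
  | .H => if Burger.h ∈ s.2 then (s.1, s.2.erase .h) else (.H :: s.1, s.2)
  | .F => if s.2 = [] then (.F :: s.1, s.2) else (s.1, s.2.tail)

/-- The reduced word `W̄` of a word `W`: the unfulfilled orders (in order of
appearance) followed by the unconsumed burgers (in order of appearance). -/
def reduce (w : List Burger) : List Burger :=
  let s := w.foldl stepRev ([], [])
  s.1.reverse ++ s.2.reverse

/-- A word is reduced if no burger symbol appears to the left of any order symbol,
i.e. it is a list of orders followed by a list of burgers. -/
def IsReduced (w : List Burger) : Prop :=
  ∃ o b : List Burger, w = o ++ b ∧ (∀ x ∈ o, x.isOrderSym) ∧ (∀ x ∈ b, x.isBurgerSym)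

/-- The word `X(a) X(a+1) ⋯ X(b)`. -/
def word (X : ℤ → Burger) (a b : ℤ) : List Burger :=
  (List.range (b + 1 - a).toNat).map fun i => X (a + i)

/-- The reduced word `X(a,b)`. -/
def rword (X : ℤ → Burger) (a b : ℤ) : List Burger := reduce (word X a b)

/-- `matched X m n` : the burger produced at time `m` is consumed by the order at time `n`;
i.e. `X m ∈ {c,h}` and `n` is the smallest integer `> m` such that the reduced word
`X(m,n)` contains no burger symbol of the same type as `X m`. -/
def matched (X : ℤ → Burger) (m n : ℤ) : Prop :=
  m < n ∧ (X m = .c ∨ X m = .h) ∧ X m ∉ rword X m n ∧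
    ∀ k, m < k → k < n → X m ∈ rword X m k

/-- Push a burger on top of a semi-infinite stack. -/
def push (st : ℕ → Burger) (x : Burger) : ℕ → Burger :=
  fun i => match i with
  | 0 => x
  | i + 1 => st i

/-- Remove the topmost burger of a semi-infinite stack. -/
def pop (st : ℕ → Burger) : ℕ → Burger := fun i => st (i + 1)

/-- Remove the topmost occurrence of the burger `b` from a semi-infinite stack. -/
noncomputable def removeTopmost (st : ℕ → Burger) (b : Burger) : ℕ → Burger :=
  fun i => if i < sInf {j | st j = b} then st i else st (i + 1)

/-- One step of the stack evolution: a burger symbol is pushed on top; an order `C`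
(resp. `H`) removes the topmost `c` (resp. `h`); an order `F` removes the topmost burger. -/
noncomputable def stepStack (st : ℕ → Burger) (x : Burger) : ℕ → Burger :=
  match x with
  | .c => push st .c
  | .h => push st .h
  | .C => removeTopmost st .c
  | .H => removeTopmost st .h
  | .F => pop st

/-- The discrepancy contribution 𝒟(Y(j)) of one step: `+1` for `h` and `C`, `-1` for `c`
and `H`; for `F` it is `+1` or `-1` according to whether the topmost burger removed is a
`c` (so `Y = C`) or an `h` (so `Y = H`). -/
noncomputable def dstep (st : ℕ → Burger) (x : Burger) : ℤ :=
  match x with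
  | .c => -1
  | .h => 1
  | .C => 1
  | .H => -1
  | .F => if st 0 = .c then 1 else -1

/-- The discrepancy `𝒟_N(x) = Σ_{j=1}^N 𝒟(Y(j))` of a finite symbol sequence `x`,
starting from the semi-infinite burger stack `st`. -/
noncomputable def DNstack (st : ℕ → Burger) : List Burger → ℤ
  | [] => 0
  | x :: xs => dstep st x + DNstack (stepStack st x) xs

end Burger

open Burger

namespace BurgerAux

/-- A stack of burgers with infinitely many burgers of each type. -/
def Good (S : ℕ → Burger) : Prop :=
  (∀ i, S i = Burger.c ∨ S i = Burger.h) ∧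
  (∀ n : ℕ, ∃ m : ℕ, n ≤ m ∧ S m = Burger.c) ∧
  (∀ n : ℕ, ∃ m : ℕ, n ≤ m ∧ S m = Burger.h)

/-- Delete the entry at position `k`. -/
def del (S : ℕ → Burger) (k : ℕ) : ℕ → Burger := fun i => if i < k then S i else S (i + 1)

/-- The weight of a burger. -/
def wt (b : Burger) : ℤ := if b = Burger.c then -1 else 1

theorem good_push {S : ℕ → Burger} (hS : Good S) {b : Burger}
    (hb : b = Burger.c ∨ b = Burger.h) : Good (push S b) := by
  obtain ⟨h1, h2, h3⟩ := hS
  refine ⟨?_, ?_, ?_⟩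
  · intro i
    cases i with
    | zero => exact hb
    | succ i => exact h1 i
  · intro n
    obtain ⟨m, hm, hc⟩ := h2 n
    exact ⟨m + 1, by omega, hc⟩
  · intro n
    obtain ⟨m, hm, hc⟩ := h3 n
    exact ⟨m + 1, by omega, hc⟩

theorem good_del {S : ℕ → Burger} (hS : Good S) (k : ℕ) : Good (del S k) := by
  obtain ⟨h1, h2, h3⟩ := hS
  have key : ∀ b, (∀ n : ℕ, ∃ m : ℕ, n ≤ m ∧ S m = b) →
      ∀ n : ℕ, ∃ m : ℕ, n ≤ m ∧ del S k m = b := by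
    intro b hb n
    obtain ⟨m, hm, hc⟩ := hb (n + k + 1)
    refine ⟨m - 1, by omega, ?_⟩
    have h4 : ¬ (m - 1 < k) := by omega
    have h5 : m - 1 + 1 = m := by omega
    simp only [del, h4, if_false, h5, hc]
  refine ⟨?_, key _ h2, key _ h3⟩
  intro i
  unfold del
  split_ifs
  · exact h1 _
  · exact h1 _

theorem pop_eq (S : ℕ → Burger) : pop S = del S 0 := by
  funext i
  simp [pop, del]

theorem removeTopmost_eq (S : ℕ → Burger) (b : Burger) :
    removeTopmost S b = del S (sInf {j | S j = b}) := rfl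

theorem good_step {S : ℕ → Burger} (hS : Good S) (x : Burger) : Good (stepStack S x) := by
  cases x with
  | c => exact good_push hS (Or.inl rfl)
  | h => exact good_push hS (Or.inr rfl)
  | C => exact good_del hS _
  | H => exact good_del hS _
  | F =>
    have h := good_del hS 0
    rw [← pop_eq] at h
    exact h

theorem del_push (S : ℕ → Burger) (b : Burger) (k : ℕ) :
    del (push S b) (k + 1) = push (del S k) b := by
  funext i
  cases i with
  | zero => simp [del, push]
  | succ i => simp [del, push]

theorem sInf_eq {S : ℕ → Burger} {b : Burger} {m : ℕ} (hm : S m = b)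
    (hlt : ∀ j < m, S j ≠ b) : sInf {j | S j = b} = m := by
  apply le_antisymm
  · exact Nat.sInf_le hm
  · apply le_csInf ⟨m, hm⟩
    intro j hj
    by_contra hc
    exact hlt j (by omega) hj

theorem del_del_lt (S : ℕ → Burger) {m k : ℕ} (h : m < k) :
    del (del S k) m = del (del S m) (k - 1) := by
  funext i
  unfold del
  grind

theorem exists_first {S : ℕ → Burger} {b : Burger}
    (hb : ∀ n : ℕ, ∃ m : ℕ, n ≤ m ∧ S m = b) :
    ∃ m, S m = b ∧ ∀ j < m, S j ≠ b := by
  classical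
  have h : ∃ m, S m = b := by
    obtain ⟨m, -, hm⟩ := hb 0
    exact ⟨m, hm⟩
  exact ⟨Nat.find h, Nat.find_spec h, fun j hj => Nat.find_min h hj⟩

/-- Removing the topmost `b` preserves the one-extra-burger relation. -/
theorem remove_step {S : ℕ → Burger} {b : Burger} (k : ℕ)
    (hb : ∀ n : ℕ, ∃ m : ℕ, n ≤ m ∧ S m = b)
    (hb' : ∀ n : ℕ, ∃ m : ℕ, n ≤ m ∧ del S k m = b) :
    ∃ k', removeTopmost (del S k) b = del (removeTopmost S b) k' ∧
      removeTopmost S b k' = S k := by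
  obtain ⟨m, hm, hlt⟩ := exists_first hb
  obtain ⟨n, hn, hltn⟩ := exists_first hb'
  rw [removeTopmost_eq, removeTopmost_eq, sInf_eq hm hlt, sInf_eq hn hltn]
  rcases lt_trichotomy m k with h | h | h
  · have hnm : n = m := by
      rw [← sInf_eq hn hltn]
      apply sInf_eq
      · simp [del, h, hm]
      · intro j hj
        have : j < k := by omega
        simpa [del, this] using hlt j hj
    subst hnm
    refine ⟨k - 1, del_del_lt S h, ?_⟩
    have h1 : ¬ (k - 1 < n) := by omega
    have h2 : k - 1 + 1 = k := by omega
    simp [del, h1, h2]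
  · subst h
    exact ⟨n, rfl, by rw [hn, hm]⟩
  · have hnm : n = m - 1 := by
      rw [← sInf_eq hn hltn]
      apply sInf_eq
      · have h1 : ¬ (m - 1 < k) := by omega
        have h2 : m - 1 + 1 = m := by omega
        simp [del, h1, h2, hm]
      · intro j hj
        unfold del
        split_ifs
        · exact hlt j (by omega)
        · exact hlt (j + 1) (by omega)
    subst hnm
    refine ⟨k, (del_del_lt S h).symm, ?_⟩
    simp [del, h]

theorem step_rel {S : ℕ → Burger} (hS : Good S) (k : ℕ) (x : Burger) :
    ∃ k', stepStack (del S k) x = del (stepStack S x) k' ∧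
      wt (S k) + dstep S x - dstep (del S k) x = wt (stepStack S x k') := by
  have hD := good_del hS k
  cases x with
  | c => exact ⟨k + 1, (del_push S _ k).symm, by simp [dstep, stepStack, push]⟩
  | h => exact ⟨k + 1, (del_push S _ k).symm, by simp [dstep, stepStack, push]⟩
  | C =>
    obtain ⟨k', h1, h2⟩ := remove_step k hS.2.1 hD.2.1
    exact ⟨k', h1, by simp [dstep, stepStack, h2]⟩
  | H =>
    obtain ⟨k', h1, h2⟩ := remove_step k hS.2.2 hD.2.2
    exact ⟨k', h1, by simp [dstep, stepStack, h2]⟩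
  | F =>
    cases k with
    | zero =>
      refine ⟨0, by simp [stepStack, pop_eq], ?_⟩
      simp only [dstep, stepStack, pop, del, wt]
      rcases hS.1 0 with h0 | h0 <;> rcases hS.1 1 with h1 | h1 <;> simp [h0, h1]
    | succ k =>
      refine ⟨k, ?_, ?_⟩
      · simp only [stepStack, pop_eq]
        exact del_del_lt S (Nat.succ_pos k)
      · simp [dstep, stepStack, pop, del]

theorem DN_rel (s : List Burger) : ∀ (S : ℕ → Burger) (k : ℕ), Good S →
    |wt (S k) + DNstack S s - DNstack (del S k) s| ≤ 1 := by
  induction s with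
  | nil =>
    intro S k _
    simp only [DNstack, wt]
    split_ifs <;> simp
  | cons x s ih =>
    intro S k hS
    obtain ⟨k', h1, h2⟩ := step_rel hS k x
    have h3 := ih (stepStack S x) k' (good_step hS x)
    simp only [DNstack]
    rw [h1]
    rw [← h2] at h3
    convert h3 using 2
    ring

theorem noop_push {S : ℕ → Burger} (hS : Good S) {b : Burger}
    (hb : b = Burger.c ∨ b = Burger.h) (s : List Burger) :
    |wt b + DNstack (push S b) s - DNstack S s| ≤ 1 := by
  have h := DN_rel s (push S b) 0 (good_push hS hb)
  have h1 : del (push S b) 0 = S := by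
    funext i
    simp [del, push]
  rw [h1] at h
  exact h

theorem noop_rel {S : ℕ → Burger} (hS : Good S) (a : Burger) (s : List Burger) :
    |dstep S a + DNstack (stepStack S a) s - DNstack S s| ≤ 1 := by
  cases a with
  | c => exact noop_push hS (Or.inl rfl) s
  | h => exact noop_push hS (Or.inr rfl) s
  | C =>
    obtain ⟨m, hm, hlt⟩ := exists_first hS.2.1
    have h := DN_rel s S m hS
    simp only [stepStack, dstep, removeTopmost_eq, sInf_eq hm hlt]
    simp only [hm, wt] at h
    rw [abs_le] at h ⊢
    simp at h
    constructor <;> linarith [h.1, h.2]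
  | H =>
    obtain ⟨m, hm, hlt⟩ := exists_first hS.2.2
    have h := DN_rel s S m hS
    simp only [stepStack, dstep, removeTopmost_eq, sInf_eq hm hlt]
    simp only [hm, wt] at h
    rw [abs_le] at h ⊢
    simp at h
    constructor <;> linarith [h.1, h.2]
  | F =>
    have h := DN_rel s S 0 hS
    simp only [stepStack, dstep, pop_eq]
    simp only [wt] at h
    rw [abs_le] at h ⊢
    split_ifs at h ⊢ <;> constructor <;> linarith [h.1, h.2]

theorem main_aux (N : ℕ) : ∀ (S : ℕ → Burger), Good S → ∀ (x y : Fin N → Burger),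
    (∃ i : Fin N, x i ≠ y i ∧ ∀ j : Fin N, j ≠ i → x j = y j) →
    |DNstack S (List.ofFn x) - DNstack S (List.ofFn y)| ≤ 2 := by
  induction N with
  | zero =>
    rintro S _ x y ⟨i, -⟩
    exact i.elim0
  | succ N ih =>
    rintro S hS x y ⟨i, hi, hj⟩
    rw [List.ofFn_succ, List.ofFn_succ]
    simp only [DNstack]
    induction i using Fin.cases with
    | zero =>
      have ht : (fun i : Fin N => x i.succ) = fun i => y i.succ := by
        funext j
        exact hj _ (Fin.succ_ne_zero j)
      rw [ht]
      have h1 := noop_rel hS (x 0) (List.ofFn fun i => y i.succ)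
      have h2 := noop_rel hS (y 0) (List.ofFn fun i => y i.succ)
      rw [abs_le] at h1 h2 ⊢
      constructor <;> linarith [h1.1, h1.2, h2.1, h2.2]
    | succ i =>
      have h0 : x 0 = y 0 := hj 0 (Fin.succ_ne_zero i).symm
      rw [h0, add_sub_add_left_eq_sub]
      exact ih _ (good_step hS _) _ _ ⟨i, hi, fun j hne =>
        hj _ (fun h => hne (Fin.succ_injective _ h))⟩

end BurgerAux

/-- Changing a single symbol of the input sequence changes the final discrepancy by at
most `2`: if `x` and `y` agree in all coordinates except exactly one, then
`|𝒟_N(x) − 𝒟_N(y)| ≤ 2`. -/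
theorem discrepancy_change_le_two
    (S0 : ℕ → Burger) (hS0 : ∀ i, S0 i = Burger.c ∨ S0 i = Burger.h)
    (hSc : ∀ n : ℕ, ∃ m : ℕ, n ≤ m ∧ S0 m = Burger.c)
    (hSh : ∀ n : ℕ, ∃ m : ℕ, n ≤ m ∧ S0 m = Burger.h)
    (N : ℕ) (hN : 0 < N) (x y : Fin N → Burger)
    (hdiff : ∃ i : Fin N, x i ≠ y i ∧ ∀ j : Fin N, j ≠ i → x j = y j) :
    |DNstack S0 (List.ofFn x) - DNstack S0 (List.ofFn y)| ≤ 2 := by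
  exact BurgerAux.main_aux N S0 ⟨hS0, hSc, hSh⟩ x y hdiff
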